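/- arXiv:2503.16935 — 4 statements merged into one kernel-verified Lean document; each statement's English description precedes it below -/
import Mathlib

section
/- Let t₀ ≤ t₁ be real numbers, let x : ℝ → ℝⁿ be differentiable on [t₀, t₁], and suppose there is L ≥ 0 such that ‖x'(τ)‖ ≤ L for all τ ∈ [t₀, t₁]. Then for every t ∈ [t₀, t₁], ‖x(t) − x(t₀)‖ + ‖x(t) − x(t₁)‖ ≤ L·(t₁ − t₀); that is, the whole trajectory segment lies in the solid ellipsoid with foci x(t₀) and x(t₁) whose points have distance-sum to the foci at most L·(t₁ − t₀). -/
/-- Ellipse-locus enclosure: a trajectory with speed bounded by `L` on `[t₀, t₁]` lies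
in the solid ellipsoid with foci `x t₀` and `x t₁` and distance-sum bound `L·(t₁ − t₀)`. -/
theorem stmt_1 {n : ℕ} (t₀ t₁ : ℝ) (ht : t₀ ≤ t₁)
    (x x' : ℝ → EuclideanSpace ℝ (Fin n)) (L : ℝ) (hL : 0 ≤ L)
    (hderiv : ∀ τ ∈ Set.Icc t₀ t₁, HasDerivWithinAt x (x' τ) (Set.Icc t₀ t₁) τ)
    (hbound : ∀ τ ∈ Set.Icc t₀ t₁, ‖x' τ‖ ≤ L) :
    ∀ t ∈ Set.Icc t₀ t₁, ‖x t - x t₀‖ + ‖x t - x t₁‖ ≤ L * (t₁ - t₀) := by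
  intro t htt
  -- The mean value inequality makes `x` Lipschitz on `[t₀, t₁]` with constant `L`; applied to
  -- both foci, the bounds `L (t - t₀)` and `L (t₁ - t)` telescope.
  have h₀ := (convex_Icc t₀ t₁).norm_image_sub_le_of_norm_hasDerivWithin_le hderiv hbound
    (Set.left_mem_Icc.2 ht) htt
  have h₁ := (convex_Icc t₀ t₁).norm_image_sub_le_of_norm_hasDerivWithin_le hderiv hbound
    (Set.right_mem_Icc.2 ht) htt
  rw [Real.norm_of_nonneg (sub_nonneg.2 htt.1)] at h₀
  rw [Real.norm_of_nonpos (sub_nonpos.2 htt.2)] at h₁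
  linarith
end

section
/- Let x₀, x₁ ∈ ℝⁿ, let t₀ < t₁ be real numbers, and let L > 0 satisfy ‖x₁ − x₀‖ ≤ L·(t₁ − t₀). Then the union over t ∈ [t₀, t₁] of the intersections B(x₀, L·(t − t₀)) ∩ B(x₁, L·(t₁ − t)) equals the solid ellipsoid {x ∈ ℝⁿ : ‖x − x₀‖ + ‖x − x₁‖ ≤ L·(t₁ − t₀)} with foci x₀ and x₁. -/
/-- The union over `t ∈ [t₀, t₁]` of the intersections
`B(x₀, L·(t − t₀)) ∩ B(x₁, L·(t₁ − t))` equals the solid ellipsoid with foci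
`x₀`, `x₁` and distance-sum bound `L·(t₁ − t₀)`, provided `‖x₁ − x₀‖ ≤ L·(t₁ − t₀)`. -/
theorem stmt_2 {n : ℕ} (x₀ x₁ : EuclideanSpace ℝ (Fin n)) (t₀ t₁ : ℝ) (ht : t₀ < t₁)
    (L : ℝ) (hL : 0 < L) (hdist : ‖x₁ - x₀‖ ≤ L * (t₁ - t₀)) :
    (⋃ t ∈ Set.Icc t₀ t₁,
        Metric.closedBall x₀ (L * (t - t₀)) ∩ Metric.closedBall x₁ (L * (t₁ - t)))
      = {x : EuclideanSpace ℝ (Fin n) | ‖x - x₀‖ + ‖x - x₁‖ ≤ L * (t₁ - t₀)} := by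
  ext x
  simp only [Set.mem_iUnion, Set.mem_inter_iff, Metric.mem_closedBall, dist_eq_norm,
    Set.mem_setOf_eq, exists_prop, Set.mem_Icc]
  constructor
  · rintro ⟨t, -, h0, h1⟩
    linarith
  · intro h
    -- The first time at which the ball growing around `x₀` reaches `x`.
    have hs : L * (‖x - x₀‖ / L) = ‖x - x₀‖ := mul_div_cancel₀ _ hL.ne'
    have hs0 : 0 ≤ ‖x - x₀‖ / L := by positivity
    have hs1 : ‖x - x₀‖ / L ≤ t₁ - t₀ := by
      rw [div_le_iff₀' hL]
      linarith [norm_nonneg (x - x₁)]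
    exact ⟨t₀ + ‖x - x₀‖ / L, ⟨by linarith, by linarith⟩, by linarith, by linarith⟩
end

section
/- (Theorem 1: Reachable time-covering contains reachable sets.) Let t₀ ≤ t₁ be real numbers, let ε ≥ 0, let L ≥ 0, and for k = 0, …, M−1 let x_k : ℝ → ℝⁿ be differentiable on [t₀, t₁] with ‖x_k'(τ)‖ ≤ L for all τ ∈ [t₀, t₁] (the forward rollouts of a δ-cover). Let Ξ : [t₀, t₁] → 𝒫(ℝⁿ) be a family of sets such that Ξ(t) ⊆ conv({x₀(t), …, x_{M−1}(t)}) ⊕ B(0, ε) for every t ∈ [t₀, t₁]. Define for each k the solid ellipsoid ℰ_k = {y ∈ ℝⁿ : ‖y − x_k(t₀)‖ + ‖y − x_k(t₁)‖ ≤ L·(t₁ − t₀)} and the Reachable Time Coverage ℛ = conv( ⋃_{k=0}^{M−1} (ℰ_k ⊕ B(0, ε)) ). Then ⋃_{t ∈ [t₀, t₁]} Ξ(t) ⊆ ℛ. -/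
/-!
By the mean value inequality, `x k t` is within `L * (t - t₀)` of `x k t₀` and within
`L * (t₁ - t)` of `x k t₁`, so it lies in the ellipsoid with these foci. Since the convex hull
commutes with Minkowski sums (`convexHull_add`), the padded hull of the states at time `t` is
contained in the hull of the padded states, hence in the hull of the padded ellipsoids.
-/

open Pointwise

/-- Theorem 1 (Reachable time-covering contains reachable sets): if each sampled
rollout `x k` has speed bounded by `L` on `[t₀, t₁]` and the reachable set `Ξ t`
is contained in the `ε`-padded convex hull of the sampled states at every time,
then the union of the reachable sets over `[t₀, t₁]` is contained in the
Reachable Time Coverage `ℛ = conv(⋃ₖ (ℰₖ ⊕ B(0, ε)))`, where `ℰₖ` is the solid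
ellipsoid with foci `x k t₀` and `x k t₁` and distance-sum bound `L·(t₁ − t₀)`. -/
theorem stmt_5 {n M : ℕ} (t₀ t₁ : ℝ) (ht : t₀ ≤ t₁) (ε L : ℝ) (hε : 0 ≤ ε) (hL : 0 ≤ L)
    (x x' : Fin M → ℝ → EuclideanSpace ℝ (Fin n))
    (hderiv : ∀ k, ∀ τ ∈ Set.Icc t₀ t₁,
      HasDerivWithinAt (x k) (x' k τ) (Set.Icc t₀ t₁) τ)
    (hbound : ∀ k, ∀ τ ∈ Set.Icc t₀ t₁, ‖x' k τ‖ ≤ L)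
    (Ξ : ℝ → Set (EuclideanSpace ℝ (Fin n)))
    (hΞ : ∀ t ∈ Set.Icc t₀ t₁,
      Ξ t ⊆ convexHull ℝ (Set.range fun k => x k t)
              + Metric.closedBall (0 : EuclideanSpace ℝ (Fin n)) ε) :
    (⋃ t ∈ Set.Icc t₀ t₁, Ξ t) ⊆
      convexHull ℝ (⋃ k : Fin M,
        ({y : EuclideanSpace ℝ (Fin n) |
            ‖y - x k t₀‖ + ‖y - x k t₁‖ ≤ L * (t₁ - t₀)}
          + Metric.closedBall (0 : EuclideanSpace ℝ (Fin n)) ε)) := by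
  refine Set.iUnion₂_subset fun t hmem => (hΞ t hmem).trans ?_
  refine (Set.add_subset_add_left (subset_convexHull ℝ _)).trans ?_
  rw [← convexHull_add]
  refine convexHull_mono ?_
  rintro _ ⟨_, ⟨k, rfl⟩, b, hb, rfl⟩
  refine Set.mem_iUnion.2 ⟨k, Set.add_mem_add ?_ hb⟩
  have lip : ∀ a ∈ Set.Icc t₀ t₁, ‖x k t - x k a‖ ≤ L * ‖t - a‖ := fun a ha =>
    (convex_Icc t₀ t₁).norm_image_sub_le_of_norm_hasDerivWithin_le
      (hderiv k) (hbound k) ha hmem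
  have h₀ := lip t₀ (Set.left_mem_Icc.2 ht)
  have h₁ := lip t₁ (Set.right_mem_Icc.2 ht)
  rw [Real.norm_of_nonneg (sub_nonneg.2 hmem.1)] at h₀
  rw [Real.norm_of_nonpos (sub_nonpos.2 hmem.2)] at h₁
  change ‖x k t - x k t₀‖ + ‖x k t - x k t₁‖ ≤ L * (t₁ - t₀)
  linarith
end

section
/- Let t₀ ≤ t₁ be real numbers, let v : ℝ → ℝⁿ be differentiable on [t₀, t₁] with ‖v'(τ)‖ ≤ a for all τ ∈ [t₀, t₁] (a ≥ 0), and suppose ‖v(t₀)‖ ≤ V and ‖v(t₁)‖ ≤ V. Then for every t ∈ [t₀, t₁], ‖v(t)‖ ≤ V + (a/2)·(t₁ − t₀). -/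
/-- Controlled Lipschitz constant: if the velocity `v` has derivative bounded by `a`
on `[t₀, t₁]` and satisfies `‖v(t₀)‖ ≤ V`, `‖v(t₁)‖ ≤ V` at the endpoints, then
`‖v(t)‖ ≤ V + (a/2)·(t₁ − t₀)` for every `t ∈ [t₀, t₁]`. -/
theorem stmt_10 {n : ℕ} (t₀ t₁ : ℝ) (ht : t₀ ≤ t₁)
    (v v' : ℝ → EuclideanSpace ℝ (Fin n)) (a V : ℝ) (ha : 0 ≤ a)
    (hderiv : ∀ τ ∈ Set.Icc t₀ t₁, HasDerivWithinAt v (v' τ) (Set.Icc t₀ t₁) τ)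
    (hbound : ∀ τ ∈ Set.Icc t₀ t₁, ‖v' τ‖ ≤ a)
    (h₀ : ‖v t₀‖ ≤ V) (h₁ : ‖v t₁‖ ≤ V) :
    ∀ t ∈ Set.Icc t₀ t₁, ‖v t‖ ≤ V + (a / 2) * (t₁ - t₀) := by
  intro t htt
  have hl := (convex_Icc t₀ t₁).norm_image_sub_le_of_norm_hasDerivWithin_le hderiv hbound
    (Set.left_mem_Icc.2 ht) htt
  have hr := (convex_Icc t₀ t₁).norm_image_sub_le_of_norm_hasDerivWithin_le hderiv hbound
    (Set.right_mem_Icc.2 ht) htt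
  rw [Real.norm_of_nonneg (sub_nonneg.2 htt.1)] at hl
  rw [Real.norm_of_nonpos (sub_nonpos.2 htt.2)] at hr
  have hl' := norm_sub_norm_le (v t) (v t₀)
  have hr' := norm_sub_norm_le (v t) (v t₁)
  -- The average of the bounds `V + a * (t - t₀)` and `V + a * (t₁ - t)` coming from the two
  -- endpoints does not depend on `t`.
  linarith
end
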